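/- arXiv:2310.12136 — 4 statements merged into one kernel-verified Lean document; each statement's English description precedes it below -/
import Mathlib

section
/- Let x ∈ Σ = {0,1}^ℕ, ℓ ≥ 1 and n ≥ 2 be integers, 0 ≤ i,j < n distinct, and ε = 2^{-h} with h ∈ ℕ. Then (i,j,ℓ) is a diagonal line in RP(x,n,ε) if and only if (i,j,ℓ+h−1) is a diagonal line in RP(x,n+h−1,ε₀), where ε₀ = 1/2. -/
open Filter Topology MeasureTheory

namespace RQA

/-- The standard metric on symbolic sequences over an alphabet `α`:
`ρ(x,y) = 2^{-min{i : x i ≠ y i}}` for `x ≠ y` and `ρ(x,x) = 0`. -/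
noncomputable def seqDist {α : Type*} (x y : ℕ → α) : ℝ :=
  haveI := Classical.propDecidable (x = y)
  if x = y then 0 else (2 : ℝ) ^ (-((sInf {i : ℕ | x i ≠ y i} : ℕ) : ℤ))

/-- The (one-sided) shift on sequences. -/
def shift {α : Type*} (x : ℕ → α) : ℕ → α := fun i => x (i + 1)

/-- The embedded sequence `x^{(m)}`, a sequence over the alphabet `α^m`. -/
def embedSeq {α : Type*} (m : ℕ) (x : ℕ → α) : ℕ → (Fin m → α) :=
  fun j t => x (j + (t : ℕ))

section RQAdefs

variable {X : Type*} (d : X → X → ℝ) (f : X → X) (x : X)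

/-- The entry of the recurrence plot at `(i,j)` equals `1`. -/
def RPone (ε : ℝ) (i j : ℕ) : Prop := d (f^[i] x) (f^[j] x) ≤ ε

/-- `(i, j, l)` is a diagonal line in the recurrence plot `RP(x, n, ε)`. -/
def IsLine (n : ℕ) (ε : ℝ) (i j l : ℕ) : Prop :=
  1 ≤ l ∧ i + l ≤ n ∧ j + l ≤ n ∧ i ≠ j ∧
  (∀ h, h < l → RPone d f x ε (i + h) (j + h)) ∧
  (0 < i → 0 < j → ¬ RPone d f x ε (i - 1) (j - 1)) ∧
  (max i j + l < n → ¬ RPone d f x ε (i + l) (j + l))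

/-- `N_l(x, n, ε)`: the number of diagonal lines of length exactly `l`. -/
noncomputable def Nlines (n : ℕ) (ε : ℝ) (l : ℕ) : ℕ :=
  Set.ncard {p : ℕ × ℕ | IsLine d f x n ε p.1 p.2 l}

/-- `P_l(x, n, ε) = N_l/(n² − n)`. -/
noncomputable def Pline (n : ℕ) (ε : ℝ) (l : ℕ) : ℝ :=
  (Nlines d f x n ε l : ℝ) / ((n : ℝ) ^ 2 - (n : ℝ))

/-- `P≥_ℓ(x, n, ε) = Σ_{l ≥ ℓ} P_l`. -/
noncomputable def PlineGe (n : ℕ) (ε : ℝ) (ℓ : ℕ) : ℝ :=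
  ∑' k : ℕ, Pline d f x n ε (ℓ + k)

/-- The recurrence rate `RR_ℓ(x, n, ε) = Σ_{l ≥ ℓ} l · P_l`. -/
noncomputable def RRate (n : ℕ) (ε : ℝ) (ℓ : ℕ) : ℝ :=
  ∑' k : ℕ, ((ℓ + k : ℕ) : ℝ) * Pline d f x n ε (ℓ + k)

/-- The determinism `DET_ℓ(x, n, ε) = RR_ℓ/RR_1`. -/
noncomputable def DETrm (n : ℕ) (ε : ℝ) (ℓ : ℕ) : ℝ :=
  RRate d f x n ε ℓ / RRate d f x n ε 1

/-- The average line length `L_ℓ(x, n, ε) = RR_ℓ/P≥_ℓ`. -/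
noncomputable def LAvg (n : ℕ) (ε : ℝ) (ℓ : ℕ) : ℝ :=
  RRate d f x n ε ℓ / PlineGe d f x n ε ℓ

/-- The entropy of line lengths
`ENT_ℓ(x, n, ε) = log P≥_ℓ − (1/P≥_ℓ)·Σ_{l≥ℓ} P_l · log P_l` (with `0·log 0 = 0`). -/
noncomputable def ENTln (n : ℕ) (ε : ℝ) (ℓ : ℕ) : ℝ :=
  Real.log (PlineGe d f x n ε ℓ) -
    (PlineGe d f x n ε ℓ)⁻¹ *
      ∑' k : ℕ, Pline d f x n ε (ℓ + k) * Real.log (Pline d f x n ε (ℓ + k))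

/-- The correlation sum
`C_ℓ(x, n, ε) = n^{-2}·#{(i,j) ∈ [0,n)² : d_ℓ(f^i x, f^j x) ≤ ε}`,
where `d_ℓ` is the Bowen metric. -/
noncomputable def corrSum (ℓ n : ℕ) (ε : ℝ) : ℝ :=
  (Set.ncard {p : ℕ × ℕ | p.1 < n ∧ p.2 < n ∧
      ∀ k, k < ℓ → d (f^[p.1 + k] x) (f^[p.2 + k] x) ≤ ε} : ℝ) / (n : ℝ) ^ 2

end RQAdefs

/-- The extension of a substitution to a morphism of the free monoid of finite words. -/
def substWord (ζ : Bool → List Bool) : List Bool → List Bool :=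
  fun w => w.foldr (fun a r => ζ a ++ r) []

/-- `ζ` is a (binary) substitution of constant length `q ≥ 2`. -/
def IsConstLenSubst (ζ : Bool → List Bool) (q : ℕ) : Prop :=
  2 ≤ q ∧ ∀ a : Bool, (ζ a).length = q

/-- The language `L_ζ`: subwords of the words `ζ^k(a)`, `a ∈ A`, `k ≥ 1`. -/
def substLang (ζ : Bool → List Bool) : Set (List Bool) :=
  {w | ∃ a : Bool, ∃ k : ℕ, 1 ≤ k ∧ w <:+: (substWord ζ)^[k] [a]}

/-- The substitution subshift `X_ζ`. -/
def SubstShift (ζ : Bool → List Bool) : Set (ℕ → Bool) :=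
  {y | ∀ n : ℕ, (List.ofFn fun t : Fin n => y (t : ℕ)) ∈ substLang ζ}

/-- `ζ` is primitive. -/
def IsPrimitive (ζ : Bool → List Bool) : Prop :=
  ∃ k : ℕ, 1 ≤ k ∧ ∀ a b : Bool, b ∈ (substWord ζ)^[k] [a]

/-- `ζ` is aperiodic: `X_ζ` contains a non-periodic sequence. -/
def IsAperiodic (ζ : Bool → List Bool) : Prop :=
  ∃ y ∈ SubstShift ζ, ∀ p : ℕ, 1 ≤ p → ∃ i : ℕ, y (i + p) ≠ y i

/-- The action of a constant length-`q` substitution on infinite sequences. -/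
def substSeq (ζ : Bool → List Bool) (q : ℕ) (x : ℕ → Bool) : ℕ → Bool :=
  fun i => (ζ (x (i / q))).getD (i % q) false

/-- `(i, j, l)` is a line in the infinite symbolic recurrence plot `RP(x, ∞, ε₀)`. -/
def IsInfLine (x : ℕ → Bool) (i j l : ℕ) : Prop :=
  1 ≤ l ∧ i ≠ j ∧ (∀ h, h < l → x (i + h) = x (j + h)) ∧
  (0 < i → 0 < j → x (i - 1) ≠ x (j - 1)) ∧ x (i + l) ≠ x (j + l)

/-- `K_l`: the set of starting points `(i,j)`, `i,j ≥ 1`, of inner lines of length `l`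
in the infinite symbolic recurrence plot. -/
def Kset (x : ℕ → Bool) (l : ℕ) : Set (ℕ × ℕ) :=
  {p | 1 ≤ p.1 ∧ 1 ≤ p.2 ∧ IsInfLine x p.1 p.2 l}

/-- `#(M ∩ [0,n)²)/n²`. -/
noncomputable def densCount (M : Set (ℕ × ℕ)) (n : ℕ) : ℝ :=
  (Set.ncard (M ∩ {p : ℕ × ℕ | p.1 < n ∧ p.2 < n}) : ℝ) / (n : ℝ) ^ 2

/-- `M ⊆ ℕ²` has asymptotic density `a`. -/
def HasDens (M : Set (ℕ × ℕ)) (a : ℝ) : Prop :=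
  Tendsto (densCount M) atTop (𝓝 a)

/-- `δ_l(n) = #(K_l ∩ [1,n)²)/(n² − n)`. -/
noncomputable def deltaK (x : ℕ → Bool) (l n : ℕ) : ℝ :=
  (Set.ncard (Kset x l ∩ {p : ℕ × ℕ | p.1 < n ∧ p.2 < n}) : ℝ) / ((n : ℝ) ^ 2 - (n : ℝ))

/-- `M` is a minimal subset of the subshift `Y`. -/
def IsMinimalSubset (Y M : Set (ℕ → Bool)) : Prop :=
  M ⊆ Y ∧ M.Nonempty ∧ IsClosed M ∧ (∀ z ∈ M, shift z ∈ M) ∧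
  ∀ M' : Set (ℕ → Bool), M' ⊆ M → M'.Nonempty → IsClosed M' →
    (∀ z ∈ M', shift z ∈ M') → M' = M

end RQA

open RQA

/-!
At radius `2 ^ (-h)` an entry of a symbolic recurrence plot is the conjunction of a window of `h`
consecutive diagonal entries at radius `1 / 2`. A run of `ℓ` windows covers `ℓ + h - 1` entries, and
the window adjacent to either end of a run contains exactly one entry outside the run, so the run of
windows stops precisely where the run of entries does.
-/

namespace RQA

section Symbolic

variable {α : Type*}

theorem seqDist_le_two_zpow_neg_iff (x y : ℕ → α) (h : ℕ) :
    seqDist x y ≤ (2 : ℝ) ^ (-(h : ℤ)) ↔ ∀ k < h, x k = y k := by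
  unfold seqDist
  split_ifs with hxy
  · simp only [hxy, implies_true, iff_true]
    positivity
  · have hne : {k | x k ≠ y k}.Nonempty := Function.ne_iff.mp hxy
    rw [zpow_le_zpow_iff_right₀ one_lt_two, neg_le_neg_iff, Nat.cast_le,
      le_csInf_iff (OrderBot.bddBelow _) hne]
    exact forall_congr' fun k => by rw [Set.mem_ofPred_eq, ← not_lt, not_imp_not]

theorem seqDist_le_half_iff (x y : ℕ → α) : seqDist x y ≤ 1 / 2 ↔ x 0 = y 0 := by
  simpa using seqDist_le_two_zpow_neg_iff x y 1

theorem shift_iterate_apply (x : ℕ → α) (i k : ℕ) : shift^[i] x k = x (i + k) := by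
  induction i generalizing k with
  | zero => rw [Function.iterate_zero_apply, Nat.zero_add]
  | succ i ih => rw [Function.iterate_succ_apply', shift, ih, Nat.add_right_comm, Nat.add_assoc]

theorem rpOne_two_zpow_neg_iff_forall_rpOne_half (x : ℕ → α) (h i j : ℕ) :
    RPone seqDist shift x ((2 : ℝ) ^ (-(h : ℤ))) i j ↔
      ∀ k < h, RPone seqDist shift x (1 / 2) (i + k) (j + k) := by
  simp only [RPone, seqDist_le_two_zpow_neg_iff, seqDist_le_half_iff, shift_iterate_apply,
    Nat.add_zero]

end Symbolic

theorem forall_lt_forall_lt_succ_add_iff {ℓ : ℕ} (hℓ : 1 ≤ ℓ) (m : ℕ) (P : ℕ → Prop) :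
    (∀ t < ℓ, ∀ k < m + 1, P (t + k)) ↔ ∀ s < ℓ + m, P s := by
  refine ⟨fun hwindows s hs => ?_, fun hrun t ht k hk => hrun _ (by omega)⟩
  obtain ⟨t, k, ht, hk, rfl⟩ : ∃ t k, t < ℓ ∧ k < m + 1 ∧ t + k = s :=
    ⟨min s (ℓ - 1), s - min s (ℓ - 1), by omega, by omega, by omega⟩
  exact hwindows t ht k hk

/-- The hypothesis `hwindow` holds, for instance, when `d'` is the Bowen metric of order `m + 1` of
`d` for the same system and radius. -/
theorem isLine_iff_isLine_add_of_rpOne_iff {X Y : Type*}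
    {d : X → X → ℝ} {f : X → X} {x : X} {ε : ℝ}
    {d' : Y → Y → ℝ} {f' : Y → Y} {y : Y} {ε' : ℝ} {m ℓ : ℕ}
    (hwindow : ∀ i j, RPone d' f' y ε' i j ↔ ∀ k < m + 1, RPone d f x ε (i + k) (j + k))
    (hℓ : 1 ≤ ℓ) (n i j : ℕ) :
    IsLine d' f' y n ε' i j ℓ ↔ IsLine d f x (n + m) ε i j (ℓ + m) := by
  have hrun_iff : (∀ t < ℓ, RPone d' f' y ε' (i + t) (j + t)) ↔
      ∀ s < ℓ + m, RPone d f x ε (i + s) (j + s) := by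
    simpa only [hwindow, Nat.add_assoc] using
      forall_lt_forall_lt_succ_add_iff hℓ m fun s => RPone d f x ε (i + s) (j + s)
  unfold IsLine
  rw [hrun_iff]
  refine and_congr (by omega) <| and_congr (by omega) <| and_congr (by omega) <|
    and_congr_right fun _ => and_congr_right fun hrun => and_congr ?before ?after
  case before =>
    refine forall_congr' fun hi => forall_congr' fun hj => not_congr ?_
    have hrest : ∀ k < m, RPone d f x ε (i - 1 + (k + 1)) (j - 1 + (k + 1)) := fun k hk => by
      rw [show i - 1 + (k + 1) = i + k by omega, show j - 1 + (k + 1) = j + k by omega]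
      exact hrun k (by omega)
    rw [hwindow, Nat.forall_lt_succ_left, and_iff_left hrest, Nat.add_zero, Nat.add_zero]
  case after =>
    refine imp_congr (by omega) (not_congr ?_)
    have hrest : ∀ k < m, RPone d f x ε (i + ℓ + k) (j + ℓ + k) := fun k hk => by
      rw [Nat.add_assoc, Nat.add_assoc]
      exact hrun (ℓ + k) (by omega)
    rw [hwindow, Nat.forall_lt_succ_right, and_iff_right hrest, Nat.add_assoc, Nat.add_assoc]

end RQA

theorem isLine_iff_isLine_eps0_general {α : Type*} (x : ℕ → α) {ℓ h : ℕ} (n i j : ℕ)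
    (hℓ : 1 ≤ ℓ) (hh : 1 ≤ h) :
    IsLine seqDist shift x n ((2 : ℝ) ^ (-(h : ℤ))) i j ℓ ↔
      IsLine seqDist shift x (n + h - 1) (1 / 2 : ℝ) i j (ℓ + h - 1) := by
  obtain ⟨m, rfl⟩ := Nat.exists_eq_add_of_le' hh
  exact isLine_iff_isLine_add_of_rpOne_iff
    (rpOne_two_zpow_neg_iff_forall_rpOne_half x (m + 1)) hℓ n i j

/-- (i,j,ℓ) is a line in RP(x,n,2^{-h}) iff (i,j,ℓ+h−1) is a line in
RP(x,n+h−1,ε₀), ε₀ = 1/2. -/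
theorem isLine_iff_isLine_eps0
    (x : ℕ → Bool) (ℓ n i j h : ℕ) (hℓ : 1 ≤ ℓ) (hn : 2 ≤ n)
    (hi : i < n) (hj : j < n) (hij : i ≠ j) (hh : 1 ≤ h) :
    IsLine seqDist shift x n ((2:ℝ) ^ (-(h:ℤ))) i j ℓ ↔
      IsLine seqDist shift x (n + h - 1) (1/2 : ℝ) i j (ℓ + h - 1) :=
  isLine_iff_isLine_eps0_general x n i j hℓ hh
end

section
/- Let x ∈ Σ = {0,1}^ℕ, m, n, ℓ ∈ ℕ and ε ∈ (0,1). Then the correlation sum of the embedded sequence satisfies C_ℓ(x^{(m)}, n, ε) = C_ℓ(x, n, 2^{-m+1}·ε). -/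
open Filter Topology MeasureTheory

open RQA

/-!
For `u ≠ v` first differing at index `N`, the words of length `m` read along `u` and `v` first
differ at index `N - (m - 1)`, truncated at `0`. Hence `ρ^{(m)} = min 1 (2^{m-1} ρ)` along the
embedding, and the cut-off at `1` is invisible to thresholds `ε < 1`. Since the embedding
intertwines the shifts, the two correlation sums count the same pairs.
-/

namespace RQA

theorem corrSum_eq_of_semiconj {X Y : Type*} {d : X → X → ℝ} {d' : Y → Y → ℝ}
    {f : X → X} {g : Y → Y} {φ : X → Y} {ε ε' : ℝ} (hφ : Function.Semiconj φ f g)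
    (hd : ∀ u v, d' (φ u) (φ v) ≤ ε' ↔ d u v ≤ ε) (x : X) (ℓ n : ℕ) :
    corrSum d' g (φ x) ℓ n ε' = corrSum d f x ℓ n ε := by
  simp only [corrSum, ← (hφ.iterate_right _).eq, hd]

section Sequences

variable {α : Type*} {m : ℕ}

theorem seqDist_self (u : ℕ → α) : seqDist u u = 0 :=
  if_pos rfl

theorem firstDiff_le_of_apply_ne {u v : ℕ → α} {i : ℕ} (hi : u i ≠ v i) :
    PiNat.firstDiff u v ≤ i :=
  not_lt.mp fun hlt ↦ hi (PiNat.apply_eq_of_lt_firstDiff hlt)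

theorem sInf_ne_eq_firstDiff {u v : ℕ → α} (huv : u ≠ v) :
    sInf {i | u i ≠ v i} = PiNat.firstDiff u v :=
  IsLeast.csInf_eq ⟨PiNat.apply_firstDiff_ne huv, fun _ ↦ firstDiff_le_of_apply_ne⟩

theorem seqDist_of_ne {u v : ℕ → α} (huv : u ≠ v) :
    seqDist u v = (2 : ℝ) ^ (-(PiNat.firstDiff u v : ℤ)) := by
  rw [seqDist, if_neg huv, sInf_ne_eq_firstDiff huv]

theorem semiconj_embedSeq_shift (m : ℕ) :
    Function.Semiconj (embedSeq (α := α) m) shift shift := fun u ↦ by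
  funext j t
  exact congrArg u (Nat.add_right_comm j t 1)

theorem embedSeq_apply_ne_iff {u v : ℕ → α} {i : ℕ} :
    embedSeq m u i ≠ embedSeq m v i ↔ ∃ t < m, u (i + t) ≠ v (i + t) := by
  simp only [Function.ne_iff, embedSeq, Fin.exists_iff, exists_prop]

theorem embedSeq_injective (hm : 1 ≤ m) : Function.Injective (embedSeq (α := α) m) :=
  fun _ _ huv ↦ funext fun i ↦ congrFun (congrFun huv i) ⟨0, hm⟩

theorem firstDiff_embedSeq (hm : 1 ≤ m) {u v : ℕ → α} (huv : u ≠ v) :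
    PiNat.firstDiff (embedSeq m u) (embedSeq m v) = PiNat.firstDiff u v - (m - 1) := by
  apply le_antisymm
  · refine firstDiff_le_of_apply_ne (embedSeq_apply_ne_iff.mpr
      ⟨min (PiNat.firstDiff u v) (m - 1), by omega, ?_⟩)
    rw [Nat.sub_add_min_cancel]
    exact PiNat.apply_firstDiff_ne huv
  · obtain ⟨t, ht, letters_ne⟩ := embedSeq_apply_ne_iff.mp
      (PiNat.apply_firstDiff_ne ((embedSeq_injective hm).ne huv))
    have := firstDiff_le_of_apply_ne letters_ne
    omega

theorem seqDist_embedSeq (hm : 1 ≤ m) (u v : ℕ → α) :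
    seqDist (embedSeq m u) (embedSeq m v) = min 1 ((2 : ℝ) ^ ((m : ℤ) - 1) * seqDist u v) := by
  rcases eq_or_ne u v with rfl | huv
  · simp [seqDist_self]
  · have exponent : -((PiNat.firstDiff u v - (m - 1) : ℕ) : ℤ) =
        min 0 ((m : ℤ) - 1 + -(PiNat.firstDiff u v : ℤ)) := by omega
    rw [seqDist_of_ne ((embedSeq_injective hm).ne huv), seqDist_of_ne huv,
      firstDiff_embedSeq hm huv, exponent, (zpow_right_mono₀ one_le_two).map_min, zpow_zero,
      zpow_add₀ two_ne_zero]

theorem seqDist_embedSeq_le_iff (hm : 1 ≤ m) {ε : ℝ} (hε : ε < 1) (u v : ℕ → α) :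
    seqDist (embedSeq m u) (embedSeq m v) ≤ ε ↔
      seqDist u v ≤ (2 : ℝ) ^ (1 - (m : ℤ)) * ε := by
  rw [seqDist_embedSeq hm, min_le_iff, or_iff_right hε.not_ge, ← neg_sub (m : ℤ) 1, zpow_neg,
    le_inv_mul_iff₀ (by positivity)]

end Sequences

end RQA

theorem embedded_corrSum_general {α : Type*} (x : ℕ → α) {m : ℕ} (n ℓ : ℕ) (hm : 1 ≤ m)
    {ε : ℝ} (hε : ε < 1) :
    corrSum seqDist shift (embedSeq m x) ℓ n ε =
      corrSum seqDist shift x ℓ n ((2 : ℝ) ^ (1 - (m : ℤ)) * ε) :=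
  corrSum_eq_of_semiconj (semiconj_embedSeq_shift m) (seqDist_embedSeq_le_iff hm hε) x ℓ n

/-- Embedded correlation sum: C_ℓ(x^{(m)},n,ε) = C_ℓ(x,n,2^{-m+1}ε). -/
theorem embedded_corrSum
    (x : ℕ → Bool) (m n ℓ : ℕ) (hm : 1 ≤ m) (hn : 1 ≤ n) (hℓ : 1 ≤ ℓ)
    (ε : ℝ) (hε0 : 0 < ε) (hε1 : ε < 1) :
    corrSum seqDist shift (embedSeq m x) ℓ n ε
      = corrSum seqDist shift x ℓ n ((2:ℝ) ^ (1 - (m : ℤ)) * ε) :=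
  embedded_corrSum_general x n ℓ hm hε1
end

section
/- Let ζ be a binary substitution of constant length q ≥ 2 with ζ(0) ≠ 0^q and ζ(1) = 1^q. For ℓ ∈ ℕ let Δ_ℓ be the maximal number of occurrences of the letter 0 in a word of length ℓ belonging to the language L_ζ. Then lim_{ℓ→∞} Δ_ℓ/ℓ = 0. -/
open Filter Topology MeasureTheory

open RQA

/-- The maximal number of occurrences of the letter 0 in a word of length ℓ of L_ζ. -/
noncomputable def maxZeros (ζ : Bool → List Bool) (ℓ : ℕ) : ℕ :=
  sSup {k : ℕ | ∃ w ∈ substLang ζ, w.length = ℓ ∧ w.count false = k}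

/-!
A word of length `ℓ` in `L_ζ` is covered by the blocks `ζ^m(a)`, of length `q ^ m`, over at most
`ℓ / q ^ m + 2` consecutive letters `a`. Each `0` has at most `q - 1` zeros in its image and `1` has
none, so such a block contains at most `(q - 1) ^ m` zeros. For `q ^ m ≤ ℓ < q ^ (m + 1)` this gives
`Δ_ℓ / ℓ ≤ 3 ((q - 1) / q) ^ m`, and `m → ∞` with `ℓ`.
-/

section Desubstitution

variable {α β : Type*} {f : α → List β} {q : ℕ}

lemma mul_length_le_length_flatMap (hf : ∀ a, q ≤ (f a).length) (u : List α) :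
    q * u.length ≤ (u.flatMap f).length := by
  induction u with
  | nil => simp
  | cons a u ih =>
    rw [List.flatMap_cons, List.length_append, List.length_cons, mul_add_one, add_comm]
    exact add_le_add (hf a) ih

lemma exists_prefix_of_prefix_flatMap (hf : ∀ a, q ≤ (f a).length) {w : List β} {u : List α}
    (hw : w <+: u.flatMap f) :
    ∃ v, v <+: u ∧ w <+: v.flatMap f ∧ q * v.length ≤ w.length + q := by
  induction u generalizing w with
  | nil => exact ⟨[], List.prefix_rfl, hw, by simp⟩
  | cons a u ih =>
    rw [List.flatMap_cons] at hw
    rcases List.prefix_or_prefix_of_prefix hw (List.prefix_append (f a) _) with h | ⟨w', rfl⟩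
    · exact ⟨[a], by simp, by simpa using h, by simp⟩
    · obtain ⟨v, hvu, hwv, hlen⟩ := ih ((List.prefix_append_right_inj _).1 hw)
      refine ⟨a :: v, by simpa using hvu, by simpa using hwv, ?_⟩
      have := hf a
      simp only [List.length_cons, List.length_append, mul_add]
      omega

lemma exists_infix_of_infix_flatMap (hf : ∀ a, q ≤ (f a).length) {w : List β} {u : List α}
    (hw : w <:+: u.flatMap f) :
    ∃ v, v <:+: u ∧ w <:+: v.flatMap f ∧ q * v.length ≤ w.length + 2 * q := by
  induction u with
  | nil => exact ⟨[], List.infix_rfl, hw, by simp⟩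
  | cons a u ih =>
    rw [List.flatMap_cons, List.infix_append_iff] at hw
    rcases hw with in_head | in_tail | ⟨x, y, rfl, hx, hy⟩
    · refine ⟨[a], (List.prefix_append [a] u).isInfix, by simpa using in_head, ?_⟩
      rw [List.length_singleton]
      omega
    · obtain ⟨v, hvu, hwv, hlen⟩ := ih in_tail
      exact ⟨v, hvu.trans (List.suffix_cons a u).isInfix, hwv, hlen⟩
    · obtain ⟨v, hvu, hyv, hlen⟩ := exists_prefix_of_prefix_flatMap hf hy
      refine ⟨a :: v, ((List.prefix_cons_inj a).2 hvu).isInfix, ?_, ?_⟩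
      · exact List.infix_append_iff.2 (Or.inr (Or.inr ⟨x, y, rfl, hx, hyv⟩))
      · simp only [List.length_cons, List.length_append, mul_add]
        omega

end Desubstitution

section IteratedSubstitution

variable {α : Type*} {f : α → List α}

lemma iterate_flatMap_eq_flatMap (k : ℕ) (u : List α) :
    (List.flatMap f)^[k] u = u.flatMap fun a => (List.flatMap f)^[k] [a] := by
  induction k with
  | zero => simp
  | succ k ih => simp only [Function.iterate_succ_apply', ih, List.flatMap_assoc]

lemma pow_mul_length_le_length_iterate_flatMap {q : ℕ} (hf : ∀ a, q ≤ (f a).length) (k : ℕ)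
    (u : List α) : q ^ k * u.length ≤ ((List.flatMap f)^[k] u).length := by
  induction k with
  | zero => simp
  | succ k ih =>
    rw [Function.iterate_succ_apply', pow_succ', mul_assoc]
    exact (Nat.mul_le_mul_left q ih).trans (mul_length_le_length_flatMap hf _)

variable [DecidableEq α] {b : α} {p : ℕ}

lemma count_flatMap_le_mul_count (hf : ∀ a, (f a).count b ≤ p * [a].count b) (u : List α) :
    (u.flatMap f).count b ≤ p * u.count b := by
  induction u with
  | nil => simp
  | cons a u ih =>
    rw [List.flatMap_cons, List.count_append, ← List.singleton_append, List.count_append, mul_add]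
    exact add_le_add (hf a) ih

lemma count_iterate_flatMap_le_pow_mul_count (hf : ∀ a, (f a).count b ≤ p * [a].count b) (k : ℕ)
    (u : List α) : ((List.flatMap f)^[k] u).count b ≤ p ^ k * u.count b := by
  induction k with
  | zero => simp
  | succ k ih =>
    rw [Function.iterate_succ_apply', pow_succ', mul_assoc]
    exact (count_flatMap_le_mul_count hf _).trans (Nat.mul_le_mul_left p ih)

lemma count_le_of_infix_iterate_flatMap {q : ℕ} (hq : 0 < q) (hp : 0 < p)
    (hlen : ∀ a, q ≤ (f a).length) (hcount : ∀ a, (f a).count b ≤ p * [a].count b)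
    {k : ℕ} {a : α} {w : List α} (hw : w <:+: (List.flatMap f)^[k] [a]) (m : ℕ) :
    w.count b ≤ p ^ m * (w.length / q ^ m + 2) := by
  rcases le_total k m with hkm | hmk
  · calc w.count b
      _ ≤ ((List.flatMap f)^[k] [a]).count b := hw.sublist.count_le b
      _ ≤ p ^ k * [a].count b := count_iterate_flatMap_le_pow_mul_count hcount k [a]
      _ ≤ p ^ m * (w.length / q ^ m + 2) := by
        gcongr
        exact List.count_le_length.trans (by simp)
  · obtain ⟨j, rfl⟩ := Nat.exists_eq_add_of_le hmk
    have block_length (c : α) : q ^ m ≤ ((List.flatMap f)^[m] [c]).length := by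
      simpa using pow_mul_length_le_length_iterate_flatMap hlen m [c]
    rw [Function.iterate_add_apply, iterate_flatMap_eq_flatMap m] at hw
    obtain ⟨v, -, hwv, hv⟩ := exists_infix_of_infix_flatMap block_length hw
    rw [← iterate_flatMap_eq_flatMap] at hwv
    have v_length : v.length ≤ w.length / q ^ m + 2 := by
      have hqm : 0 < q ^ m := by positivity
      rw [← Nat.add_mul_div_right _ _ hqm, Nat.le_div_iff_mul_le hqm, mul_comm]
      exact hv
    calc w.count b
      _ ≤ ((List.flatMap f)^[m] v).count b := hwv.sublist.count_le b
      _ ≤ p ^ m * v.count b := count_iterate_flatMap_le_pow_mul_count hcount m v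
      _ ≤ p ^ m * (w.length / q ^ m + 2) := by
        gcongr
        exact List.count_le_length.trans v_length

end IteratedSubstitution

lemma count_lt_length_of_ne_replicate {α : Type*} [DecidableEq α] {a : α} {l : List α}
    (h : l ≠ List.replicate l.length a) : l.count a < l.length := by
  refine List.count_le_length.lt_of_ne fun hcount => h ?_
  exact List.eq_replicate_iff.2 ⟨rfl, fun b hb => (List.count_eq_length.1 hcount b hb).symm⟩

lemma substWord_eq_flatMap (ζ : Bool → List Bool) : substWord ζ = List.flatMap ζ := by
  funext w
  induction w with
  | nil => rfl
  | cons a w ih =>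
    rw [List.flatMap_cons, ← ih]
    rfl

lemma maxZeros_le {ζ : Bool → List Bool} {ℓ n : ℕ}
    (h : ∀ w ∈ substLang ζ, w.length = ℓ → w.count false ≤ n) : maxZeros ζ ℓ ≤ n := by
  refine csSup_le' ?_
  rintro _ ⟨w, hw, hlen, rfl⟩
  exact h w hw hlen

section MaxZeros

variable {ζ : Bool → List Bool} {q : ℕ}

lemma count_false_subst_le_mul_count_singleton (hlen : (ζ false).length = q)
    (h0 : ζ false ≠ List.replicate q false) (h1 : ζ true = List.replicate q true) (a : Bool) :
    (ζ a).count false ≤ (q - 1) * [a].count false := by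
  cases a with
  | true => simp [h1, List.count_replicate]
  | false =>
    subst hlen
    simpa using Nat.le_sub_one_of_lt (count_lt_length_of_ne_replicate h0)

lemma maxZeros_le_pow_mul (hζ : IsConstLenSubst ζ q) (h0 : ζ false ≠ List.replicate q false)
    (h1 : ζ true = List.replicate q true) (ℓ m : ℕ) :
    maxZeros ζ ℓ ≤ (q - 1) ^ m * (ℓ / q ^ m + 2) := by
  obtain ⟨hq, hlen⟩ := hζ
  refine maxZeros_le ?_
  rintro w ⟨a, k, -, hw⟩ rfl
  rw [substWord_eq_flatMap] at hw
  exact count_le_of_infix_iterate_flatMap (by omega) (by omega) (fun a => (hlen a).ge)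
    (count_false_subst_le_mul_count_singleton (hlen false) h0 h1) hw m

lemma maxZeros_div_le_pow_log (hζ : IsConstLenSubst ζ q) (h0 : ζ false ≠ List.replicate q false)
    (h1 : ζ true = List.replicate q true) {ℓ : ℕ} (hℓ : ℓ ≠ 0) :
    (maxZeros ζ ℓ : ℝ) / ℓ ≤ 3 * (((q - 1 : ℕ) : ℝ) / q) ^ Nat.log q ℓ := by
  set m := Nat.log q ℓ
  have hq : (0 : ℝ) < q := by exact_mod_cast zero_lt_two.trans_le hζ.1
  have hqm : (q : ℝ) ^ m ≤ ℓ := by exact_mod_cast Nat.pow_log_le_self q hℓ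
  rw [div_le_iff₀ (by positivity)]
  calc (maxZeros ζ ℓ : ℝ)
    _ ≤ ((q - 1 : ℕ) : ℝ) ^ m * ((ℓ / q ^ m : ℕ) + 2) := by
      exact_mod_cast maxZeros_le_pow_mul hζ h0 h1 ℓ m
    _ ≤ ((q - 1 : ℕ) : ℝ) ^ m * (ℓ / (q : ℝ) ^ m + 2 * (ℓ / (q : ℝ) ^ m)) := by
      gcongr
      · exact_mod_cast Nat.cast_div_le
      · exact le_mul_of_one_le_right zero_le_two ((one_le_div (by positivity)).2 hqm)
    _ = 3 * (((q - 1 : ℕ) : ℝ) / q) ^ m * ℓ := by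
      rw [div_pow]
      ring

end MaxZeros

/-- if ζ(0) ≠ 0^q and ζ(1) = 1^q, then Δ_ℓ/ℓ → 0. -/
theorem maxZeros_div_tendsto_zero
    (ζ : Bool → List Bool) (q : ℕ) (hζ : IsConstLenSubst ζ q)
    (h0 : ζ false ≠ List.replicate q false) (h1 : ζ true = List.replicate q true) :
    Tendsto (fun ℓ : ℕ => (maxZeros ζ ℓ : ℝ) / (ℓ : ℝ)) atTop (𝓝 0) := by
  have hq : 1 < q := hζ.1
  have ratio_lt_one : ((q - 1 : ℕ) : ℝ) / q < 1 := by
    rw [div_lt_one (by positivity)]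
    exact_mod_cast Nat.sub_one_lt_of_lt hq
  have log_tendsto : Tendsto (Nat.log q) atTop atTop :=
    tendsto_atTop_atTop_of_monotone Nat.log_monotone fun m => ⟨q ^ m, (Nat.log_pow hq m).ge⟩
  have bound_tendsto :
      Tendsto (fun ℓ : ℕ => 3 * (((q - 1 : ℕ) : ℝ) / q) ^ Nat.log q ℓ) atTop (𝓝 0) := by
    simpa using ((tendsto_pow_atTop_nhds_zero_of_lt_one (by positivity) ratio_lt_one).comp
      log_tendsto).const_mul 3
  refine squeeze_zero' (Eventually.of_forall fun ℓ => by positivity) ?_ bound_tendsto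
  filter_upwards [eventually_ne_atTop 0] with ℓ hℓ
  exact maxZeros_div_le_pow_log hζ h0 h1 hℓ
end

section
/- Let ζ be a primitive aperiodic binary substitution of constant length q ≥ 2 with ζ(0) starting with 0, let x = ζ^∞(0) be its fixed point starting with 0, and for ℓ ≥ 1 and n ≥ 2 define δ_ℓ(n) = #(K_ℓ ∩ [1,n)²)/(n² − n). Then there exist constants 0 < c₀ ≤ 1 ≤ c such that for every ℓ ≥ 1 and every n ≥ 2 with K_ℓ ∩ [1,n)² ≠ ∅ one has c₀/ℓ² ≤ δ_ℓ(n) ≤ c/ℓ². -/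
open Filter Topology MeasureTheory

open RQA

/-!
Lower bound. By primitivity every word of length `ℓ` occurs in the fixed point `x` with gaps at most
`C ℓ`. A line of length `ℓ` starting at `(i, j)` depends only on the words of length `ℓ + 2` at
`i - 1` and `j - 1`, so one line below `n` produces about `(n / (C ℓ))²` of them.

Upper bound. If `x` is eventually periodic, there are no long lines at all. Otherwise `x` is
recognizable: two occurrences of a word of length `ℓ` are congruent modulo some `q ^ k` comparable
to `ℓ`. Moreover, since the alphabet is binary, the images of two distinct letters under `ζ ^ k` are
always the same unordered pair of words, and the last place where these two words differ determines
where a line of length at least `q ^ k` may start modulo `q ^ k`. Hence the starting points of all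
lines of length `ℓ` lie in a single residue class modulo `q ^ k` in both coordinates.
-/

namespace RQA

/-! ### Sets of natural numbers with bounded gaps -/

/-- `S` is syndetic with gap bound `M`: every block of `M` consecutive natural numbers meets `S`. -/
def HasGapsLE (S : Set ℕ) (M : ℕ) : Prop :=
  ∀ s, ∃ t ∈ S, s ≤ t ∧ t < s + M

namespace HasGapsLE

variable {S T : Set ℕ} {M N : ℕ}

lemma mono (h : HasGapsLE S M) (hST : S ⊆ T) (hMN : M ≤ N) : HasGapsLE T N := by
  intro s
  obtain ⟨t, htS, hst, hts⟩ := h s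
  exact ⟨t, hST htS, hst, by lia⟩

lemma pos (h : HasGapsLE S M) : 0 < M := by
  obtain ⟨t, -, -, ht⟩ := h 0
  lia

lemma image_mul_add {Q r : ℕ} (h : HasGapsLE S M) (hr : r < Q) :
    HasGapsLE ((fun t ↦ Q * t + r) '' S) (Q * (M + 1)) := by
  intro s
  obtain ⟨t, htS, hst, hts⟩ := h (s / Q + 1)
  have hs := Nat.div_add_mod s Q
  have hsQ := Nat.mod_lt s (by lia : Q > 0)
  have hlow : Q * (s / Q + 1) ≤ Q * t := Nat.mul_le_mul_left Q hst
  have hhigh : Q * t ≤ Q * (s / Q + M) := Nat.mul_le_mul_left Q (by lia)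
  refine ⟨Q * t + r, Set.mem_image_of_mem _ htS, ?_, ?_⟩ <;> lia

lemma div_le_ncard (h : HasGapsLE S M) (n : ℕ) : n / M ≤ (S ∩ Set.Iio n).ncard := by
  choose t htS hst hts using h
  have hdiv (m : ℕ) : t (m * M) / M = m :=
    Nat.div_eq_of_lt_le (hst _) (by rw [Nat.succ_mul]; exact hts _)
  rw [← Set.ncard_Iio_nat (n / M)]
  refine Set.ncard_le_ncard_of_injOn (fun m ↦ t (m * M)) (fun m hm ↦ ⟨htS _, ?_⟩)
    (fun a _ b _ hab ↦ ?_) ((Set.finite_Iio n).inter_of_right S)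
  · calc t (m * M) < m * M + M := hts _
      _ = (m + 1) * M := by ring
      _ ≤ n / M * M := Nat.mul_le_mul_right M hm
      _ ≤ n := Nat.div_mul_le_self n M
  · rw [← hdiv a, ← hdiv b]
    exact congrArg (· / M) hab

end HasGapsLE

lemma exists_forall_hasGapsLE_fiber {β : Type*} [Finite β] {f : ℕ → β}
    (h : ∀ u, ∃ M, HasGapsLE {t | f t = f u} M) : ∃ M, ∀ u, HasGapsLE {t | f t = f u} M := by
  have hvalue (b : β) : ∃ M, ∀ u, f u = b → HasGapsLE {t | f t = b} M := by
    by_cases hb : ∃ u, f u = b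
    · obtain ⟨u, rfl⟩ := hb
      exact (h u).imp fun M hM _ _ ↦ hM
    · exact ⟨0, fun u hu ↦ (hb ⟨u, hu⟩).elim⟩
  choose M hM using hvalue
  obtain ⟨B, hB⟩ := Finite.exists_le M
  exact ⟨B, fun u ↦ (hM (f u) u rfl).mono subset_rfl (hB _)⟩

/-! ### Words of a sequence -/

section Words

variable {α : Type*} {x : ℕ → α} {i j l L d : ℕ}

lemma embedSeq_eq_embedSeq_iff :
    embedSeq l x i = embedSeq l x j ↔ ∀ h < l, x (i + h) = x (j + h) :=
  funext_iff.trans ⟨fun h t ht ↦ h ⟨t, ht⟩, fun h t ↦ h t t.2⟩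

lemma embedSeq_add_eq_of_embedSeq_eq (h : embedSeq L x i = embedSeq L x j) (hd : d + l ≤ L) :
    embedSeq l x (i + d) = embedSeq l x (j + d) := by
  rw [embedSeq_eq_embedSeq_iff] at h ⊢
  intro t ht
  rw [add_assoc, add_assoc]
  exact h (d + t) (by lia)

end Words

/-! ### Eventually periodic sequences -/

/-- The sequence `x` satisfies `x (i + p) = x i` for some period `p > 0` and all large `i`. -/
def IsEventuallyPeriodic {α : Type*} (x : ℕ → α) : Prop :=
  ∃ p > 0, ∀ᶠ i in atTop, x (i + p) = x i

lemma isEventuallyPeriodic_of_deterministic {β : Type*} [Finite β] {f : ℕ → β}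
    (h : ∀ a b, f a = f b → f (a + 1) = f (b + 1)) : IsEventuallyPeriodic f := by
  obtain ⟨a, b, hab, hfab⟩ : ∃ a b, a < b ∧ f a = f b := by
    obtain ⟨a, b, hne, hfab⟩ := Finite.exists_ne_map_eq_of_infinite f
    rcases hne.lt_or_gt with hlt | hlt
    exacts [⟨a, b, hlt, hfab⟩, ⟨b, a, hlt, hfab.symm⟩]
  refine ⟨b - a, by lia, eventually_atTop.2 ⟨a, fun n hn ↦ ?_⟩⟩
  induction n, hn using Nat.le_induction with
  | base => rw [Nat.add_sub_cancel' hab.le, hfab]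
  | succ n _ ih => rw [add_right_comm]; exact h _ _ ih

lemma isEventuallyPeriodic_of_blocks {α : Type*} {x : ℕ → α} {d : ℕ} (hd : 0 < d)
    (h : IsEventuallyPeriodic fun n ↦ embedSeq d x (d * n)) : IsEventuallyPeriodic x := by
  obtain ⟨p, hp, hper⟩ := h
  obtain ⟨N, hN⟩ := eventually_atTop.1 hper
  refine ⟨d * p, Nat.mul_pos hd hp, eventually_atTop.2 ⟨d * N, fun i hi ↦ ?_⟩⟩
  have hblock := embedSeq_eq_embedSeq_iff.1
    (hN (i / d) ((Nat.le_div_iff_mul_le hd).2 (by lia))) (i % d) (Nat.mod_lt i hd)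
  rwa [mul_add, add_right_comm, Nat.div_add_mod] at hblock

lemma IsEventuallyPeriodic.exists_forall_Kset_eq_empty {x : ℕ → Bool}
    (h : IsEventuallyPeriodic x) : ∃ B, ∀ l ≥ B, Kset x l = ∅ := by
  obtain ⟨p, hp, hper⟩ := h
  obtain ⟨N, hN⟩ := eventually_atTop.1 hper
  refine ⟨N + p, fun l hl ↦ Set.eq_empty_of_forall_notMem ?_⟩
  rintro ⟨i, j⟩ ⟨-, -, -, -, hagree, -, hend⟩
  have hback (a : ℕ) : x (a + l) = x (a + (l - p)) := by
    rw [← hN (a + (l - p)) (by lia)]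
    congr 1
    lia
  exact hend (by rw [hback, hback, hagree (l - p) (by lia)])

/-! ### Fixed points of substitutions of constant length -/

/-- The block of `x` of length `q` at `q * u` depends only on the letter `x u`. This says that `x`
is a fixed point of a substitution of constant length `q`, without naming the substitution. -/
def IsUniformFixedPoint {α : Type*} (q : ℕ) (x : ℕ → α) : Prop :=
  ∀ u v, x u = x v → embedSeq q x (q * u) = embedSeq q x (q * v)

namespace IsUniformFixedPoint

section Recurrence

variable {α : Type*} {q : ℕ} {x : ℕ → α}

lemma embedSeq_mul (hx : IsUniformFixedPoint q x) {u v L : ℕ}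
    (h : embedSeq L x u = embedSeq L x v) :
    embedSeq (q * L) x (q * u) = embedSeq (q * L) x (q * v) := by
  rw [embedSeq_eq_embedSeq_iff] at h ⊢
  intro t ht
  have hq : 0 < q := Nat.pos_of_mul_pos_right (by lia : 0 < q * L)
  have hblock := embedSeq_eq_embedSeq_iff.1
    (hx _ _ (h (t / q) (Nat.div_lt_of_lt_mul ht))) (t % q) (Nat.mod_lt t hq)
  simpa only [mul_add, add_assoc, Nat.div_add_mod] using hblock

lemma pow (hx : IsUniformFixedPoint q x) (k : ℕ) : IsUniformFixedPoint (q ^ k) x := by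
  induction k with
  | zero => exact fun u v huv ↦ embedSeq_eq_embedSeq_iff.2 (by simpa using huv)
  | succ k ih =>
    intro u v huv
    rw [pow_succ', mul_assoc, mul_assoc]
    exact hx.embedSeq_mul (ih u v huv)

lemma embedSeq_mul_add_mod (hx : IsUniformFixedPoint q x) {i t l L : ℕ} (hq : 0 < q)
    (hl : q + l ≤ q * L) (h : embedSeq L x t = embedSeq L x (i / q)) :
    embedSeq l x (q * t + i % q) = embedSeq l x i := by
  have hi := Nat.mod_lt i hq
  simpa only [Nat.div_add_mod] using
    embedSeq_add_eq_of_embedSeq_eq (d := i % q) (hx.embedSeq_mul h) (by lia)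

lemma exists_hasGapsLE_embedSeq (hx : IsUniformFixedPoint q x) (hq : 1 < q)
    (hrec : ∃ M, HasGapsLE {t | x t = x 0} M) (i l : ℕ) :
    ∃ M, HasGapsLE {t | embedSeq l x t = embedSeq l x i} M := by
  obtain ⟨M, hM⟩ := hrec
  have hlt : i + l < q ^ (i + l) := Nat.lt_pow_self hq
  refine ⟨_, (hM.image_mul_add (by lia : i < q ^ (i + l))).mono ?_ le_rfl⟩
  rintro _ ⟨t, ht, rfl⟩
  have hprefix := hx.pow (i + l) t 0 ht
  simpa only [mul_zero, zero_add, Set.mem_ofPred_eq] using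
    embedSeq_add_eq_of_embedSeq_eq (d := i) (l := l) hprefix hlt.le

lemma exists_hasGapsLE_embedSeq_mod (hx : IsUniformFixedPoint q x) (hq : 1 < q)
    (hrec : ∃ M, HasGapsLE {t | x t = x 0} M) (i l : ℕ) :
    ∃ M, HasGapsLE {t : ℕ | (t : ZMod q) = i ∧ embedSeq l x t = embedSeq l x i} M := by
  obtain ⟨M, hM⟩ := hx.exists_hasGapsLE_embedSeq hq hrec (i / q) (l + 1)
  refine ⟨_, (hM.image_mul_add (Nat.mod_lt i (by lia : q > 0))).mono ?_ le_rfl⟩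
  rintro _ ⟨t, ht, rfl⟩
  exact ⟨by simp, hx.embedSeq_mul_add_mod (by lia) (by nlinarith) ht⟩

lemma exists_hasGapsLE_mul_length [Finite α] (hx : IsUniformFixedPoint q x) (hq : 1 < q)
    (hrec : ∃ M, HasGapsLE {t | x t = x 0} M) :
    ∃ C, ∀ i l, 0 < l → HasGapsLE {t | embedSeq l x t = embedSeq l x i} (C * l) := by
  obtain ⟨M, hM⟩ := exists_forall_hasGapsLE_fiber fun u ↦
    hx.exists_hasGapsLE_embedSeq hq hrec u 2
  refine ⟨q * (M + 1), fun i l hl ↦ ?_⟩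
  set Q := q ^ (Nat.log q l + 1) with hQ
  have hQpos : 0 < Q := by positivity
  have hlQ : l < Q := Nat.lt_pow_succ_log_self hq l
  have hQl : Q ≤ q * l := by
    rw [hQ, pow_succ']
    exact Nat.mul_le_mul_left q (Nat.pow_log_le_self q hl.ne')
  refine ((hM (i / Q)).image_mul_add (Nat.mod_lt i hQpos)).mono ?_ ?_
  · rintro _ ⟨t, ht, rfl⟩
    exact (hx.pow _).embedSeq_mul_add_mod hQpos (by lia) ht
  · calc Q * (M + 1) ≤ q * l * (M + 1) := Nat.mul_le_mul_right _ hQl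
      _ = q * (M + 1) * l := by ring

end Recurrence

end IsUniformFixedPoint

lemma bool_eq_or_eq_of_ne {a b : Bool} (h : a ≠ b) (c : Bool) : c = a ∨ c = b := by
  decide +revert

namespace IsUniformFixedPoint

section Binary

variable {q : ℕ} {x : ℕ → Bool}

lemma apply_mul_add_eq_iff_of_ne (hx : IsUniformFixedPoint q x) {u v u' v' r : ℕ} (hr : r < q)
    (huv : x u ≠ x v) (huv' : x u' ≠ x v') :
    x (q * u + r) = x (q * v + r) ↔ x (q * u' + r) = x (q * v' + r) := by
  have hpairs : (x u = x u' ∧ x v = x v') ∨ (x u = x v' ∧ x v = x u') := by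
    rcases bool_eq_or_eq_of_ne huv' (x u) with h | h <;>
      rcases bool_eq_or_eq_of_ne huv' (x v) with h' | h' <;> grind
  have hblock {a b : ℕ} (hab : x a = x b) : x (q * a + r) = x (q * b + r) :=
    embedSeq_eq_embedSeq_iff.1 (hx a b hab) r hr
  rcases hpairs with ⟨hu, hv⟩ | ⟨hu, hv⟩
  · rw [hblock hu, hblock hv]
  · rw [hblock hu, hblock hv, eq_comm]

lemma exists_forall_ne_apply_mul_add_ne (hx : IsUniformFixedPoint q x) (hq : 0 < q)
    (hap : ¬ IsEventuallyPeriodic x) :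
    ∃ r < q, ∀ u v, x u ≠ x v → x (q * u + r) ≠ x (q * v + r) := by
  by_contra! hcon
  refine hap (isEventuallyPeriodic_of_blocks hq ⟨1, one_pos, .of_forall fun n ↦ ?_⟩)
  refine embedSeq_eq_embedSeq_iff.2 fun r hr ↦ ?_
  by_cases hn : x (n + 1) = x n
  · exact embedSeq_eq_embedSeq_iff.1 (hx _ _ hn) r hr
  · obtain ⟨u, v, huv, heq⟩ := hcon r hr
    exact (hx.apply_mul_add_eq_iff_of_ne hr hn huv).2 heq

/-! ### Recognizability -/

-- There are only two possible blocks at the multiples of `d`. Two of them with the same first half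
-- and different second halves would force all first halves to coincide.
lemma isEventuallyPeriodic_of_stride (hx : IsUniformFixedPoint q x) {d : ℕ} (hd : 0 < d)
    (hdq : 2 * d ≤ q) (hblock : ∀ n, ∃ u, embedSeq q x (d * n) = embedSeq q x (q * u)) :
    IsEventuallyPeriodic x := by
  choose u hu using hblock
  refine isEventuallyPeriodic_of_blocks hd (isEventuallyPeriodic_of_deterministic ?_)
  intro a b hab
  by_contra hne
  have hletter : x (u a) ≠ x (u b) := by
    intro heq
    have hfull : embedSeq q x (d * a) = embedSeq q x (d * b) := by rw [hu, hu, hx _ _ heq]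
    exact hne (embedSeq_add_eq_of_embedSeq_eq hfull (by lia))
  have hconst (n : ℕ) : embedSeq d x (d * n) = embedSeq d x (d * a) := by
    rcases bool_eq_or_eq_of_ne hletter (x (u n)) with h | h
    · have hfull : embedSeq q x (d * n) = embedSeq q x (d * a) := by rw [hu, hu, hx _ _ h]
      exact embedSeq_add_eq_of_embedSeq_eq (d := 0) hfull (by lia)
    · have hfull : embedSeq q x (d * n) = embedSeq q x (d * b) := by rw [hu, hu, hx _ _ h]
      exact (embedSeq_add_eq_of_embedSeq_eq (d := 0) hfull (by lia)).trans hab.symm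
  exact hne ((hconst (a + 1)).trans (hconst (b + 1)).symm)

end Binary

end IsUniformFixedPoint

/-- The residues `e` modulo `q` such that every word of `x` occurring at a position `i` also occurs
at a position congruent to `i + e`. Recognizability of `x` amounts to `0` being the only one. -/
def returnResidues {α : Type*} (q : ℕ) (x : ℕ → α) : AddSubmonoid (ZMod q) where
  carrier := {e | ∀ i l : ℕ, ∃ j : ℕ, (j : ZMod q) = i + e ∧ embedSeq l x j = embedSeq l x i}
  zero_mem' i _ := ⟨i, (add_zero _).symm, rfl⟩
  add_mem' {e f} he hf i l := by
    obtain ⟨j, hj, hji⟩ := he i l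
    obtain ⟨k, hk, hkj⟩ := hf j l
    exact ⟨k, by rw [hk, hj, add_assoc], hkj.trans hji⟩

section ReturnResidues

variable {α : Type*} {q : ℕ} {x : ℕ → α}

lemma neg_mem_returnResidues [NeZero q] {e : ZMod q} (he : e ∈ returnResidues q x) :
    -e ∈ returnResidues q x := by
  have hneg : -e = (q - 1) • e := by
    rw [nsmul_eq_mul, Nat.cast_sub NeZero.one_le, ZMod.natCast_self]
    ring
  exact hneg ▸ nsmul_mem he (q - 1)

lemma exists_embedSeq_mul_eq_of_mem_returnResidues [NeZero q] {i : ℕ}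
    (hi : (i : ZMod q) ∈ returnResidues q x) (l : ℕ) :
    ∃ u, embedSeq l x i = embedSeq l x (q * u) := by
  obtain ⟨j, hj, hji⟩ := neg_mem_returnResidues hi i l
  rw [add_neg_cancel, ZMod.natCast_eq_zero_iff] at hj
  obtain ⟨u, rfl⟩ := hj
  exact ⟨u, hji.symm⟩

lemma exists_two_mul_le_mem_returnResidues [NeZero q] {e : ZMod q}
    (he : e ∈ returnResidues q x) (he0 : e ≠ 0) :
    ∃ d : ℕ, 0 < d ∧ 2 * d ≤ q ∧ (d : ZMod q) ∈ returnResidues q x := by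
  obtain ⟨d, hd⟩ := e.valMinAbs.eq_nat_or_neg
  have hle := e.natAbs_valMinAbs_le
  have hne := (ZMod.valMinAbs_eq_zero e).not.2 he0
  refine ⟨d, by lia, by lia, ?_⟩
  have hcast := e.coe_valMinAbs
  rcases hd with hd | hd
  · rw [hd, Int.cast_natCast] at hcast
    exact hcast ▸ he
  · rw [hd, Int.cast_neg, Int.cast_natCast, neg_eq_iff_eq_neg] at hcast
    exact hcast ▸ neg_mem_returnResidues he

namespace IsUniformFixedPoint

lemma mem_returnResidues (hx : IsUniformFixedPoint q x) (hq : 1 < q)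
    (hrec : ∃ M, HasGapsLE {t | x t = x 0} M) {e : ZMod q}
    (he : ∀ l, ∃ i j : ℕ, (j : ZMod q) = i + e ∧ embedSeq l x j = embedSeq l x i) :
    e ∈ returnResidues q x := by
  intro i l
  obtain ⟨M, hM⟩ := hx.exists_hasGapsLE_embedSeq_mod hq hrec i l
  obtain ⟨a, b, hb, hba⟩ := he (M + l)
  obtain ⟨t, ⟨hti, hword⟩, hat, htM⟩ := hM a
  obtain ⟨d, rfl⟩ := Nat.exists_eq_add_of_le hat
  refine ⟨b + d, ?_, (embedSeq_add_eq_of_embedSeq_eq hba (by lia)).trans hword⟩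
  rw [← hti, Nat.cast_add, Nat.cast_add, hb]
  ring

lemma exists_ne_zero_mem_returnResidues (hx : IsUniformFixedPoint q x) (hq : 1 < q)
    (hrec : ∃ M, HasGapsLE {t | x t = x 0} M)
    (h : ∀ l, ∃ i j : ℕ, embedSeq l x i = embedSeq l x j ∧ ¬ i ≡ j [MOD q]) :
    ∃ e ∈ returnResidues q x, e ≠ 0 := by
  have : NeZero q := ⟨by lia⟩
  choose i j hword hmod using h
  obtain ⟨e, he⟩ := Finite.exists_infinite_fiber fun l ↦ ((j l : ZMod q) - i l)
  rw [Set.infinite_coe_iff] at he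
  refine ⟨e, hx.mem_returnResidues hq hrec fun l ↦ ?_, ?_⟩
  · obtain ⟨m, hm, hlm⟩ := he.exists_gt l
    exact ⟨i m, j m, sub_eq_iff_eq_add'.1 hm,
      embedSeq_add_eq_of_embedSeq_eq (d := 0) (hword m).symm (by lia)⟩
  · rintro rfl
    obtain ⟨m, hm⟩ := he.nonempty
    exact hmod m ((ZMod.natCast_eq_natCast_iff _ _ _).1 (sub_eq_zero.1 hm).symm)

end IsUniformFixedPoint

end ReturnResidues

lemma embedSeq_div_add_one_eq {α : Type*} {q : ℕ} {x : ℕ → α} {r i j l : ℕ} (hr : r < q)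
    (hdiff : ∀ u v, x u ≠ x v → x (q * u + r) ≠ x (q * v + r)) (hij : i ≡ j [MOD q])
    (h : embedSeq l x i = embedSeq l x j) :
    embedSeq (l / q - 1) x (i / q + 1) = embedSeq (l / q - 1) x (j / q + 1) := by
  rw [embedSeq_eq_embedSeq_iff] at h ⊢
  intro t ht
  by_contra hne
  have hiq := Nat.mod_lt i (by lia : q > 0)
  have hoffset (a : ℕ) (ha : a % q = i % q) :
      q * (a / q + 1 + t) + r = a + (q * (t + 1) + r - i % q) := by
    have hdecomp := Nat.div_add_mod a q
    rw [mul_add, mul_add, mul_add] at *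
    lia
  have hfit : q * (t + 2) ≤ l :=
    (Nat.mul_le_mul_left q (by lia)).trans (Nat.mul_div_le l q)
  refine hdiff _ _ hne ?_
  rw [hoffset i rfl, hoffset j hij.symm]
  exact h _ (by lia)

namespace IsUniformFixedPoint

variable {q : ℕ} {x : ℕ → Bool}

lemma exists_forall_modEq (hx : IsUniformFixedPoint q x) (hq : 1 < q)
    (hrec : ∃ M, HasGapsLE {t | x t = x 0} M) (hap : ¬ IsEventuallyPeriodic x) :
    ∃ L, ∀ i j, embedSeq L x i = embedSeq L x j → i ≡ j [MOD q] := by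
  by_contra! hcon
  have : NeZero q := ⟨by lia⟩
  obtain ⟨e, he, he0⟩ := hx.exists_ne_zero_mem_returnResidues hq hrec hcon
  obtain ⟨d, hd, hdq, hmem⟩ := exists_two_mul_le_mem_returnResidues he he0
  refine hap (hx.isEventuallyPeriodic_of_stride hd hdq fun n ↦
    exists_embedSeq_mul_eq_of_mem_returnResidues ?_ q)
  rw [mul_comm, Nat.cast_mul, ← nsmul_eq_mul]
  exact nsmul_mem hmem n

lemma exists_forall_modEq_pow (hx : IsUniformFixedPoint q x) (hq : 1 < q)
    (hrec : ∃ M, HasGapsLE {t | x t = x 0} M) (hap : ¬ IsEventuallyPeriodic x) :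
    ∃ D > 0, ∀ k i j l, D * q ^ k ≤ l + 2 → embedSeq l x i = embedSeq l x j →
      i ≡ j [MOD q ^ k] := by
  obtain ⟨L, hL⟩ := hx.exists_forall_modEq hq hrec hap
  obtain ⟨r, hr, hdiff⟩ := hx.exists_forall_ne_apply_mul_add_ne (by lia) hap
  refine ⟨L + 2, by lia, fun k ↦ ?_⟩
  induction k with
  | zero => exact fun i j l _ _ ↦ by simp [Nat.modEq_one]
  | succ k ih =>
    intro i j l hl hword
    have hpow : 0 < q ^ (k + 1) := by positivity
    have hmod : i ≡ j [MOD q] :=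
      hL i j (embedSeq_add_eq_of_embedSeq_eq (d := 0) hword (by nlinarith))
    have hlength : (L + 2) * q ^ k ≤ l / q - 1 + 2 := by
      have : (L + 2) * q ^ k ≤ (l + q) / q :=
        (Nat.le_div_iff_mul_le (by lia)).2 (by rw [mul_assoc, ← pow_succ]; lia)
      rw [Nat.add_div_right _ (by lia)] at this
      lia
    have hdiv : i / q ≡ j / q [MOD q ^ k] :=
      (ih _ _ _ hlength (embedSeq_div_add_one_eq hr hdiff hmod hword)).add_right_cancel' 1
    have hrecombine := (hdiv.mul_left' q).add_right (j % q)
    rwa [Nat.div_add_mod, ← hmod, Nat.div_add_mod, ← pow_succ'] at hrecombine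

lemma exists_forall_exists_pow_modEq (hx : IsUniformFixedPoint q x) (hq : 1 < q)
    (hrec : ∃ M, HasGapsLE {t | x t = x 0} M) (hap : ¬ IsEventuallyPeriodic x) :
    ∃ D, ∀ l > 0, ∃ k, q ^ k ≤ l ∧ l ≤ D * q ^ k ∧
      ∀ i j, embedSeq l x i = embedSeq l x j → i ≡ j [MOD q ^ k] := by
  obtain ⟨D, hD, hmod⟩ := hx.exists_forall_modEq_pow hq hrec hap
  refine ⟨D * q, fun l hl ↦ ⟨Nat.log q (l / D), ?_⟩⟩
  have hupper : l ≤ D * q * q ^ Nat.log q (l / D) := by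
    have := (Nat.div_lt_iff_lt_mul hD).1 (Nat.lt_pow_succ_log_self hq (l / D))
    rw [pow_succ] at this
    linarith
  rcases Nat.eq_zero_or_pos (l / D) with hzero | hpos
  · rw [hzero] at hupper ⊢
    refine ⟨?_, hupper, fun i j _ ↦ by simp [Nat.modEq_one]⟩
    rwa [Nat.log_zero_right, pow_zero]
  · have hlower : D * q ^ Nat.log q (l / D) ≤ l :=
      (Nat.mul_le_mul_left D (Nat.pow_log_le_self q hpos.ne')).trans (Nat.mul_div_le l D)
    exact ⟨by nlinarith, hupper, fun i j ↦ hmod _ i j l (by lia)⟩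

end IsUniformFixedPoint

/-! ### Primitive substitutions -/

section Substitution

variable {ζ : Bool → List Bool} {q : ℕ} {x : ℕ → Bool}

lemma ofFn_embedSeq_mul (hζ : IsConstLenSubst ζ q) (hx : substSeq ζ q x = x) (u : ℕ) :
    List.ofFn (embedSeq q x (q * u)) = ζ (x u) := by
  refine List.ext_getElem (by rw [List.length_ofFn, hζ.2]) fun r hr hr' ↦ ?_
  rw [List.length_ofFn] at hr
  have hletter := congrFun hx (q * u + r)
  rw [substSeq, Nat.mul_add_div (by lia), Nat.div_eq_of_lt hr, add_zero, Nat.mul_add_mod,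
    Nat.mod_eq_of_lt hr, List.getD_eq_getElem _ _ hr'] at hletter
  rw [List.getElem_ofFn, hletter, embedSeq]

lemma isUniformFixedPoint_of_substSeq_eq (hζ : IsConstLenSubst ζ q) (hx : substSeq ζ q x = x) :
    IsUniformFixedPoint q x := fun u v huv ↦
  List.ofFn_injective (by rw [ofFn_embedSeq_mul hζ hx, ofFn_embedSeq_mul hζ hx, huv])

lemma substWord_eq_flatMap (w : List Bool) : substWord ζ w = w.flatMap ζ := by
  induction w with
  | nil => rfl
  | cons a w ih => rw [List.flatMap_cons, ← ih]; rfl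

lemma substWord_ofFn_embedSeq (hζ : IsConstLenSubst ζ q) (hx : substSeq ζ q x = x) (m u : ℕ) :
    substWord ζ (List.ofFn (embedSeq m x u)) = List.ofFn (embedSeq (m * q) x (q * u)) := by
  rw [substWord_eq_flatMap, List.ofFn_mul, List.flatMap_def, List.map_ofFn]
  refine congrArg (fun blocks ↦ (List.ofFn blocks).flatten) (funext fun t ↦ ?_)
  rw [Function.comp_apply, embedSeq, ← ofFn_embedSeq_mul hζ hx]
  refine congrArg List.ofFn (funext fun r ↦ ?_)
  simp only [embedSeq]
  congr 1
  ring

lemma substWord_iterate_singleton (hζ : IsConstLenSubst ζ q) (hx : substSeq ζ q x = x)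
    (k u : ℕ) : (substWord ζ)^[k] [x u] = List.ofFn (embedSeq (q ^ k) x (q ^ k * u)) := by
  induction k with
  | zero => simp [embedSeq]
  | succ k ih =>
    rw [Function.iterate_succ_apply', ih, substWord_ofFn_embedSeq hζ hx, ← mul_assoc, ← pow_succ',
      pow_succ]

lemma IsPrimitive.exists_hasGapsLE (hprim : IsPrimitive ζ) (hζ : IsConstLenSubst ζ q)
    (hx : substSeq ζ q x = x) (b : Bool) : ∃ M, HasGapsLE {t | x t = b} M := by
  obtain ⟨k, -, hk⟩ := hprim
  refine ⟨2 * q ^ k, fun s ↦ ?_⟩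
  have hmem := hk (x (s / q ^ k + 1)) b
  rw [substWord_iterate_singleton hζ hx, List.mem_ofFn] at hmem
  obtain ⟨r, hr⟩ := hmem
  have hs := Nat.div_add_mod s (q ^ k)
  have hmod := Nat.mod_lt s r.pos
  refine ⟨_, hr, ?_, ?_⟩ <;> rw [mul_add, mul_one] <;> lia

end Substitution

/-! ### Starting points of lines -/

section Lines

variable {x : ℕ → Bool} {l n i j i' j' : ℕ}

lemma succ_mem_Kset_iff : (i + 1, j + 1) ∈ Kset x l ↔
    1 ≤ l ∧ x i ≠ x j ∧ embedSeq l x (i + 1) = embedSeq l x (j + 1) ∧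
      x (i + 1 + l) ≠ x (j + 1 + l) := by
  rw [embedSeq_eq_embedSeq_iff]
  constructor
  · rintro ⟨-, -, hl, -, hword, hstart, hend⟩
    exact ⟨hl, hstart i.succ_pos j.succ_pos, hword, hend⟩
  · rintro ⟨hl, hstart, hword, hend⟩
    exact ⟨by lia, by lia, hl, fun hij ↦ hstart (by rw [Nat.succ_injective hij]), hword,
      fun _ _ ↦ hstart, hend⟩

lemma exists_succ_of_mem_Kset {p : ℕ × ℕ} (hp : p ∈ Kset x l) : ∃ i j, p = (i + 1, j + 1) :=
  ⟨p.1 - 1, p.2 - 1, Prod.ext (Nat.sub_add_cancel hp.1).symm (Nat.sub_add_cancel hp.2.1).symm⟩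

lemma succ_mem_Kset_of_embedSeq_eq (h : (i + 1, j + 1) ∈ Kset x l)
    (hi : embedSeq (l + 2) x i' = embedSeq (l + 2) x i)
    (hj : embedSeq (l + 2) x j' = embedSeq (l + 2) x j) : (i' + 1, j' + 1) ∈ Kset x l := by
  rw [succ_mem_Kset_iff] at h ⊢
  obtain ⟨hl, hstart, hword, hend⟩ := h
  have hi_letter := embedSeq_eq_embedSeq_iff.1 hi
  have hj_letter := embedSeq_eq_embedSeq_iff.1 hj
  refine ⟨hl, ?_, ?_, ?_⟩
  · exact (hi_letter 0 (by lia)).trans_ne (hstart.trans_eq (hj_letter 0 (by lia)).symm)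
  · exact (embedSeq_add_eq_of_embedSeq_eq hi (by lia)).trans
      (hword.trans (embedSeq_add_eq_of_embedSeq_eq hj (by lia)).symm)
  · rw [add_assoc, add_assoc] at hend ⊢
    rwa [hi_letter _ (by lia), hj_letter _ (by lia)]

/-- The set `K_l ∩ [1,n)²` of starting points of inner lines of length `l` below `n`. -/
abbrev KsetBelow (x : ℕ → Bool) (l n : ℕ) : Set (ℕ × ℕ) :=
  Kset x l ∩ {p | p.1 < n ∧ p.2 < n}

lemma KsetBelow_subset : KsetBelow x l n ⊆ Set.Ioo 0 n ×ˢ Set.Ioo 0 n :=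
  fun _ hp ↦ ⟨⟨hp.1.1, hp.2.1⟩, ⟨hp.1.2.1, hp.2.2⟩⟩

lemma KsetBelow_finite : (KsetBelow x l n).Finite :=
  ((Set.finite_Ioo 0 n).prod (Set.finite_Ioo 0 n)).subset KsetBelow_subset

lemma ncard_KsetBelow_le : (KsetBelow x l n).ncard ≤ (n - 1) ^ 2 := by
  refine (Set.ncard_le_ncard KsetBelow_subset
    ((Set.finite_Ioo 0 n).prod (Set.finite_Ioo 0 n))).trans_eq ?_
  rw [Set.ncard_prod, Set.ncard_eq_toFinset_card', Set.toFinset_Ioo, Nat.card_Ioo, sq]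
  rfl

end Lines

/-! ### Lower bound -/

section LowerBound

variable {x : ℕ → Bool} {l n i j W : ℕ}

lemma sq_div_le_ncard_KsetBelow (hij : (i + 1, j + 1) ∈ Kset x l)
    (hgaps : ∀ i, HasGapsLE {t | embedSeq (l + 2) x t = embedSeq (l + 2) x i} W) :
    ((n - 1) / W) ^ 2 ≤ (KsetBelow x l n).ncard := by
  let occ (a : ℕ) : Set ℕ :=
    {t | embedSeq (l + 2) x t = embedSeq (l + 2) x a} ∩ Set.Iio (n - 1)
  calc ((n - 1) / W) ^ 2 = (n - 1) / W * ((n - 1) / W) := sq _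
    _ ≤ (occ i).ncard * (occ j).ncard :=
        Nat.mul_le_mul ((hgaps i).div_le_ncard _) ((hgaps j).div_le_ncard _)
    _ = (occ i ×ˢ occ j).ncard := Set.ncard_prod.symm
    _ ≤ (KsetBelow x l n).ncard := by
        refine Set.ncard_le_ncard_of_injOn (Prod.map (· + 1) (· + 1)) ?_
          ((add_left_injective 1).prodMap (add_left_injective 1)).injOn KsetBelow_finite
        rintro ⟨a, b⟩ ⟨⟨ha, han⟩, ⟨hb, hbn⟩⟩
        exact ⟨succ_mem_Kset_of_embedSeq_eq hij ha hb, Nat.add_lt_of_lt_sub han,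
          Nat.add_lt_of_lt_sub hbn⟩

lemma sq_le_mul_ncard_KsetBelow
    (hgaps : ∀ i, HasGapsLE {t | embedSeq (l + 2) x t = embedSeq (l + 2) x i} W)
    (hne : (KsetBelow x l n).Nonempty) :
    (n - 1) ^ 2 ≤ 4 * W ^ 2 * (KsetBelow x l n).ncard := by
  have hone : 1 ≤ (KsetBelow x l n).ncard := (Set.ncard_pos KsetBelow_finite).2 hne
  obtain ⟨p, hp, -⟩ := hne
  obtain ⟨i, j, rfl⟩ := exists_succ_of_mem_Kset hp
  set N := (n - 1) / W
  have hsq : N ^ 2 ≤ (KsetBelow x l n).ncard := sq_div_le_ncard_KsetBelow hp hgaps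
  have hlt : n - 1 ≤ W * (N + 1) := (Nat.lt_mul_div_succ (n - 1) (hgaps 0).pos).le
  calc (n - 1) ^ 2 ≤ (W * (N + 1)) ^ 2 := Nat.pow_le_pow_left hlt 2
    _ = W ^ 2 * (N + 1) ^ 2 := mul_pow _ _ 2
    _ ≤ W ^ 2 * (4 * (KsetBelow x l n).ncard) := Nat.mul_le_mul_left _ (by nlinarith)
    _ = 4 * W ^ 2 * (KsetBelow x l n).ncard := by ring

lemma IsUniformFixedPoint.exists_mul_pred_le_mul_ncard_KsetBelow {q : ℕ}
    (hx : IsUniformFixedPoint q x) (hq : 1 < q) (hrec : ∃ M, HasGapsLE {t | x t = x 0} M) :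
    ∃ C, ∀ l n, 0 < l → (KsetBelow x l n).Nonempty →
      n * (n - 1) ≤ C * l ^ 2 * (KsetBelow x l n).ncard := by
  obtain ⟨C, hC⟩ := hx.exists_hasGapsLE_mul_length hq hrec
  refine ⟨72 * C ^ 2, fun l n hl hne ↦ ?_⟩
  have hW : C * (l + 2) ≤ C * (3 * l) := Nat.mul_le_mul_left C (by lia)
  have hsq := sq_le_mul_ncard_KsetBelow
    (fun i ↦ (hC i (l + 2) (by lia)).mono subset_rfl hW) hne
  obtain ⟨p, hp, hpn, -⟩ := hne
  have hn : n ≤ 2 * (n - 1) := by have := hp.1; lia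
  calc n * (n - 1) ≤ 2 * (n - 1) * (n - 1) := Nat.mul_le_mul_right _ hn
    _ = 2 * (n - 1) ^ 2 := by ring
    _ ≤ 2 * (4 * (C * (3 * l)) ^ 2 * (KsetBelow x l n).ncard) := Nat.mul_le_mul_left 2 hsq
    _ = 72 * C ^ 2 * l ^ 2 * (KsetBelow x l n).ncard := by ring

end LowerBound

/-! ### Upper bound -/

section UpperBound

lemma card_filter_modEq_mul_le {Q : ℕ} (hQ : 0 < Q) (n v : ℕ) :
    {t ∈ Finset.range n | t ≡ v [MOD Q]}.card * Q ≤ n + Q := by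
  have hcount : {t ∈ Finset.range n | t ≡ v [MOD Q]}.card ≤ n / Q + 1 := by
    rw [← Nat.count_eq_card_filter_range, Nat.count_modEq_card n hQ]
    split_ifs <;> lia
  calc _ ≤ (n / Q + 1) * Q := Nat.mul_le_mul_right Q hcount
    _ = n / Q * Q + Q := Nat.succ_mul _ _
    _ ≤ n + Q := Nat.add_le_add_right (Nat.div_mul_le_self n Q) Q

namespace IsUniformFixedPoint

variable {Q l n : ℕ} {x : ℕ → Bool}

-- There is only one pair of distinct `Q`-blocks, and it differs at offset `a' % Q`. If that were
-- larger than `a % Q`, it would be a mismatch inside the common word after `a` and `b`.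
lemma mod_le_mod_of_ne (hx : IsUniformFixedPoint Q x) (hQ : 0 < Q) (hQl : Q ≤ l) {a b a' b' : ℕ}
    (hab : a ≡ b [MOD Q]) (hne : x a ≠ x b)
    (hword : embedSeq l x (a + 1) = embedSeq l x (b + 1))
    (hab' : a' ≡ b' [MOD Q]) (hne' : x a' ≠ x b') : a' % Q ≤ a % Q := by
  have hletter {c d : ℕ} (hcd : c ≡ d [MOD Q]) (hne : x c ≠ x d) : x (c / Q) ≠ x (d / Q) := by
    intro heq
    have hblock := embedSeq_eq_embedSeq_iff.1 (hx _ _ heq) (c % Q) (Nat.mod_lt c hQ)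
    rw [Nat.div_add_mod, hcd, Nat.div_add_mod] at hblock
    exact hne hblock
  by_contra! hlt
  have hr := Nat.mod_lt a' hQ
  have hshift {c : ℕ} (hc : c % Q = a % Q) :
      Q * (c / Q) + a' % Q = c + 1 + (a' % Q - a % Q - 1) := by
    have := Nat.div_add_mod c Q
    lia
  have hagree : x (Q * (a / Q) + a' % Q) = x (Q * (b / Q) + a' % Q) := by
    rw [hshift rfl, hshift hab.symm]
    exact embedSeq_eq_embedSeq_iff.1 hword _ (by lia)
  rw [hx.apply_mul_add_eq_iff_of_ne hr (hletter hab hne) (hletter hab' hne'), Nat.div_add_mod,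
    hab', Nat.div_add_mod] at hagree
  exact hne' hagree

lemma fst_modEq_of_mem_Kset (hx : IsUniformFixedPoint Q x) (hQ : 0 < Q) (hQl : Q ≤ l)
    (hmod : ∀ i j, embedSeq l x i = embedSeq l x j → i ≡ j [MOD Q]) {p p' : ℕ × ℕ}
    (hp : p ∈ Kset x l) (hp' : p' ∈ Kset x l) : p.1 ≡ p'.1 [MOD Q] := by
  obtain ⟨a, b, rfl⟩ := exists_succ_of_mem_Kset hp
  obtain ⟨a', b', rfl⟩ := exists_succ_of_mem_Kset hp'
  obtain ⟨-, hne, hword, -⟩ := succ_mem_Kset_iff.1 hp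
  obtain ⟨-, hne', hword', -⟩ := succ_mem_Kset_iff.1 hp'
  have hab := (hmod _ _ hword).add_right_cancel' 1
  have hab' := (hmod _ _ hword').add_right_cancel' 1
  have hres : a ≡ a' [MOD Q] :=
    (hx.mod_le_mod_of_ne hQ hQl hab' hne' hword' hab hne).antisymm
      (hx.mod_le_mod_of_ne hQ hQl hab hne hword hab' hne')
  exact hres.add_right 1

lemma ncard_KsetBelow_mul_sq_le (hx : IsUniformFixedPoint Q x) (hQ : 0 < Q) (hQl : Q ≤ l)
    (hmod : ∀ i j, embedSeq l x i = embedSeq l x j → i ≡ j [MOD Q]) :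
    (KsetBelow x l n).ncard * Q ^ 2 ≤ 8 * (n * (n - 1)) := by
  obtain hempty | ⟨p, hp, hpn⟩ := (KsetBelow x l n).eq_empty_or_nonempty
  · simp [hempty]
  have hdiag {p : ℕ × ℕ} (hp : p ∈ Kset x l) : p.1 ≡ p.2 [MOD Q] :=
    hmod _ _ (embedSeq_eq_embedSeq_iff.2 hp.2.2.2.2.1)
  have hQn : Q < n := by
    by_contra! hnQ
    exact hp.2.2.2.1 ((hdiag hp).eq_of_lt_of_lt (hpn.1.trans_le hnQ) (hpn.2.trans_le hnQ))
  let cls : Finset ℕ := {t ∈ Finset.range n | t ≡ p.1 [MOD Q]}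
  have hsub : KsetBelow x l n ⊆ (cls ×ˢ cls : Finset (ℕ × ℕ)) := by
    rintro p' ⟨hp', hpn'⟩
    have hfst := hx.fst_modEq_of_mem_Kset hQ hQl hmod hp' hp
    simpa [cls, hfst, (hdiag hp').symm.trans hfst] using hpn'
  have hcls : cls.card * Q ≤ 2 * n := (card_filter_modEq_mul_le hQ n p.1).trans (by lia)
  calc (KsetBelow x l n).ncard * Q ^ 2 ≤ (cls ×ˢ cls).card * Q ^ 2 :=
        Nat.mul_le_mul_right _ (by
          simpa only [Set.ncard_coe_finset] using Set.ncard_le_ncard hsub (Finset.finite_toSet _))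
    _ = (cls.card * Q) ^ 2 := by rw [Finset.card_product]; ring
    _ ≤ (2 * n) ^ 2 := Nat.pow_le_pow_left hcls 2
    _ = 4 * (n * n) := by ring
    _ ≤ 4 * (n * (2 * (n - 1))) := by gcongr; lia
    _ = 8 * (n * (n - 1)) := by ring

variable {q : ℕ}

lemma exists_ncard_KsetBelow_mul_sq_le (hx : IsUniformFixedPoint q x) (hq : 1 < q)
    (hrec : ∃ M, HasGapsLE {t | x t = x 0} M) :
    ∃ C, ∀ l n, 0 < l → (KsetBelow x l n).ncard * l ^ 2 ≤ C * (n * (n - 1)) := by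
  by_cases hper : IsEventuallyPeriodic x
  · obtain ⟨B, hB⟩ := hper.exists_forall_Kset_eq_empty
    refine ⟨B ^ 2, fun l n _ ↦ ?_⟩
    rcases le_or_gt B l with hBl | hlB
    · simp [KsetBelow, hB l hBl]
    · calc (KsetBelow x l n).ncard * l ^ 2 ≤ (n - 1) ^ 2 * B ^ 2 :=
            Nat.mul_le_mul ncard_KsetBelow_le (Nat.pow_le_pow_left hlB.le 2)
        _ = B ^ 2 * ((n - 1) * (n - 1)) := by ring
        _ ≤ B ^ 2 * (n * (n - 1)) := by gcongr; lia
  · obtain ⟨D, hD⟩ := hx.exists_forall_exists_pow_modEq hq hrec hper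
    refine ⟨8 * D ^ 2, fun l n hl ↦ ?_⟩
    obtain ⟨k, hkl, hlk, hmod⟩ := hD l hl
    calc (KsetBelow x l n).ncard * l ^ 2 ≤ (KsetBelow x l n).ncard * (D * q ^ k) ^ 2 :=
          Nat.mul_le_mul_left _ (Nat.pow_le_pow_left hlk 2)
      _ = D ^ 2 * ((KsetBelow x l n).ncard * (q ^ k) ^ 2) := by ring
      _ ≤ D ^ 2 * (8 * (n * (n - 1))) := Nat.mul_le_mul_left _
          ((hx.pow k).ncard_KsetBelow_mul_sq_le (by positivity) hkl hmod)
      _ = 8 * D ^ 2 * (n * (n - 1)) := by ring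

end IsUniformFixedPoint

end UpperBound

section Density

variable {x : ℕ → Bool} {l n C : ℕ}

lemma deltaK_eq_div_cast : deltaK x l n = (KsetBelow x l n).ncard / (n * (n - 1) : ℕ) := by
  rw [deltaK, Nat.cast_mul]
  rcases Nat.eq_zero_or_pos n with rfl | hn
  · simp
  · rw [Nat.cast_pred hn]
    ring_nf

lemma deltaK_le_of_ncard_mul_sq_le (hl : 0 < l) (hn : 2 ≤ n)
    (h : (KsetBelow x l n).ncard * l ^ 2 ≤ C * (n * (n - 1))) :
    deltaK x l n ≤ (C + 1) / (l : ℝ) ^ 2 := by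
  have hpos : 0 < n * (n - 1) := Nat.mul_pos (by lia) (by lia)
  rw [deltaK_eq_div_cast, div_le_div_iff₀ (by positivity) (by positivity)]
  exact_mod_cast h.trans (Nat.mul_le_mul_right _ C.le_succ)

lemma le_deltaK_of_mul_pred_le (hl : 0 < l) (hn : 2 ≤ n)
    (h : n * (n - 1) ≤ C * l ^ 2 * (KsetBelow x l n).ncard) :
    1 / ((C : ℝ) + 1) / (l : ℝ) ^ 2 ≤ deltaK x l n := by
  have hpos : 0 < n * (n - 1) := Nat.mul_pos (by lia) (by lia)
  rw [deltaK_eq_div_cast, div_div, div_le_div_iff₀ (by positivity) (by positivity), one_mul,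
    mul_comm _ (_ * _ : ℝ)]
  exact_mod_cast h.trans (Nat.mul_le_mul_right _ (Nat.mul_le_mul_right _ C.le_succ))

end Density

end RQA

theorem deltaK_bounds_general
    (ζ : Bool → List Bool) (q : ℕ) (hζ : IsConstLenSubst ζ q) (hprim : IsPrimitive ζ)
    (x : ℕ → Bool) (hxfix : substSeq ζ q x = x) :
    ∃ c₀ c : ℝ, 0 < c₀ ∧ c₀ ≤ 1 ∧ 1 ≤ c ∧
      ∀ ℓ n : ℕ, 1 ≤ ℓ → 2 ≤ n →
        (Kset x ℓ ∩ {p : ℕ × ℕ | p.1 < n ∧ p.2 < n}).Nonempty →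
        c₀ / (ℓ : ℝ) ^ 2 ≤ deltaK x ℓ n ∧ deltaK x ℓ n ≤ c / (ℓ : ℝ) ^ 2 := by
  have hx : IsUniformFixedPoint q x := isUniformFixedPoint_of_substSeq_eq hζ hxfix
  have hrec : ∃ M, HasGapsLE {t | x t = x 0} M := hprim.exists_hasGapsLE hζ hxfix (x 0)
  obtain ⟨C₀, hlower⟩ := hx.exists_mul_pred_le_mul_ncard_KsetBelow hζ.1 hrec
  obtain ⟨C, hupper⟩ := hx.exists_ncard_KsetBelow_mul_sq_le hζ.1 hrec
  refine ⟨1 / ((C₀ : ℝ) + 1), C + 1, by positivity, ?_, by simp, fun ℓ n hℓ hn hne ↦ ⟨?_, ?_⟩⟩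
  · exact div_le_one_of_le₀ (by simp) (by positivity)
  · exact le_deltaK_of_mul_pred_le hℓ hn (hlower ℓ n hℓ hne)
  · exact deltaK_le_of_ncard_mul_sq_le hℓ hn (hupper ℓ n hℓ)

/-- there are constants 0 < c₀ ≤ 1 ≤ c with
c₀/ℓ² ≤ δ_ℓ(n) ≤ c/ℓ² whenever K_ℓ ∩ [1,n)² ≠ ∅. -/
theorem deltaK_bounds
    (ζ : Bool → List Bool) (q : ℕ) (hζ : IsConstLenSubst ζ q)
    (hprim : IsPrimitive ζ) (hap : IsAperiodic ζ)
    (hζ0 : (ζ false).head? = some false)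
    (x : ℕ → Bool) (hx0 : x 0 = false) (hxfix : substSeq ζ q x = x) :
    ∃ c₀ c : ℝ, 0 < c₀ ∧ c₀ ≤ 1 ∧ 1 ≤ c ∧
      ∀ ℓ n : ℕ, 1 ≤ ℓ → 2 ≤ n →
        (Kset x ℓ ∩ {p : ℕ × ℕ | p.1 < n ∧ p.2 < n}).Nonempty →
        c₀ / (ℓ : ℝ) ^ 2 ≤ deltaK x ℓ n ∧ deltaK x ℓ n ≤ c / (ℓ : ℝ) ^ 2 :=
  deltaK_bounds_general ζ q hζ hprim x hxfix
end
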